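/- There exists a constant C > 0 such that for every R with 0 < R < e^{-1} and every u ∈ H¹(ℝ², ℂ), the convolution K_R ∗ |u|² satisfies the pointwise (essential supremum) bound ‖K_R ∗ |u|²‖_∞ ≤ C √(|log R|) · ‖u‖_{H¹}². -/

import Mathlib

noncomputable section
open MeasureTheory ENNReal
open scoped RealInnerProductSpace

/-- The plane `ℝ²`. -/
abbrev E2 : Type := EuclideanSpace ℝ (Fin 2)

/-- The rotation by 90 degrees: `x^⊥ = (-x₂, x₁)`. -/
def perp (x : E2) : E2 := (WithLp.equiv 2 (Fin 2 → ℝ)).symm ![-(x 1), x 0]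

/-- The Aharonov–Bohm kernel `K_R(x) = x^⊥ / (max R ‖x‖)²` (with `K_R 0 = 0`,
also when `R = 0`, by the junk-value convention `(0 : ℝ)⁻¹ = 0`). -/
def K (R : ℝ) (x : E2) : E2 := ((max R ‖x‖) ^ 2)⁻¹ • perp x

/-- The standard basis of `ℝ²`. -/
def e2 (j : Fin 2) : E2 := EuclideanSpace.single j 1

/-- Componentwise convolution of the vector kernel `K_R` with a scalar density. -/
def convKs (R : ℝ) (ρ : E2 → ℝ) (x : E2) : E2 := ∫ y, ρ y • K R (x - y)

/-- Convolution of the vector kernel `K_R` with a vector field, summed over components. -/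
def convKv (R : ℝ) (F : E2 → E2) (x : E2) : ℝ := ∫ y, ⟪K R (x - y), F y⟫

/-- The current `J[u] = i(u∇ū - ū∇u) = 2 Im(ū ∇u)`, an `ℝ²`-valued function. -/
def Jf (u : E2 → ℂ) (x : E2) : E2 :=
  (WithLp.equiv 2 (Fin 2 → ℝ)).symm fun j =>
    2 * ((starRingEnd ℂ) (u x) * fderiv ℝ u x (e2 j)).im

/-- The `H¹` norm `(‖u‖₂² + ‖∇u‖₂²)^{1/2}` (extended-real valued). -/
def H1 (u : E2 → ℂ) : ℝ≥0∞ :=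
  (eLpNorm u 2 volume ^ 2 + eLpNorm (fun x => fderiv ℝ u x) 2 volume ^ 2) ^ (1 / 2 : ℝ)

/-- The `H²` norm `(‖u‖₂² + ‖∇u‖₂² + ‖∇²u‖₂²)^{1/2}` (extended-real valued). -/
def H2 (u : E2 → ℂ) : ℝ≥0∞ :=
  (eLpNorm u 2 volume ^ 2 + eLpNorm (fun x => fderiv ℝ u x) 2 volume ^ 2
    + eLpNorm (fun x => fderiv ℝ (fderiv ℝ u) x) 2 volume ^ 2) ^ (1 / 2 : ℝ)

/-!
The kernel satisfies `‖K_R(x)‖ ≤ 1 / ‖x‖` for every `R`, so it is enough to bound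
`∫ ‖x - y‖⁻¹ |u(y)|² dy`. The `L¹` Hardy inequality `(n - 1) ∫ ‖f‖ / ‖z‖ ≤ ∫ ‖Df‖` in dimension
`n = 2`, applied to `f = |u|²`, bounds it by `∫ ‖D|u|²‖ ≤ ∫ 2 |u| |∇u| ≤ ‖u‖_{H¹}²`, uniformly in
`R`; and `√|log R| ≥ 1` for `R < e⁻¹`.

In polar coordinates, Hardy's inequality reduces to
`(k + 1) ∫ r ^ k ‖g‖ dr ≤ ∫ r ^ (k + 1) ‖g'‖ dr` with `k = n - 2` on each ray: integrate
`‖g r‖ ≤ ∫_r^∞ ‖g'‖` against `r ^ k` and exchange the order of integration.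
-/

section HalfLine

open Set Filter
open scoped Topology

lemma lintegral_Ioi_mul_lintegral_Ioi {w h : ℝ → ℝ≥0∞} (hw : Measurable w) (hh : Measurable h) :
    ∫⁻ r in Ioi 0, w r * ∫⁻ s in Ioi r, h s = ∫⁻ s in Ioi 0, (∫⁻ r in Ioo 0 s, w r) * h s := by
  let T : Set (ℝ × ℝ) := {p | 0 < p.1 ∧ p.1 < p.2}
  let φ : ℝ × ℝ → ℝ≥0∞ := T.indicator fun p => w p.1 * h p.2
  have hφ : Measurable φ :=
    Measurable.indicator (by fun_prop)
      ((measurableSet_lt measurable_const measurable_fst).inter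
        (measurableSet_lt measurable_fst measurable_snd))
  calc ∫⁻ r in Ioi 0, w r * ∫⁻ s in Ioi r, h s
      = ∫⁻ r, ∫⁻ s, φ (r, s) := by
        rw [← lintegral_indicator measurableSet_Ioi]
        refine lintegral_congr fun r => ?_
        by_cases hr : 0 < r
        · rw [indicator_of_mem (mem_Ioi.2 hr), ← lintegral_const_mul _ hh,
            ← lintegral_indicator measurableSet_Ioi]
          simp [φ, T, indicator, hr]
        · simp [φ, T, indicator, hr]
    _ = ∫⁻ s, ∫⁻ r, φ (r, s) := lintegral_lintegral_swap hφ.aemeasurable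
    _ = ∫⁻ s in Ioi 0, (∫⁻ r in Ioo 0 s, w r) * h s := by
        rw [← lintegral_indicator measurableSet_Ioi]
        refine lintegral_congr fun s => ?_
        by_cases hs : 0 < s
        · rw [indicator_of_mem (mem_Ioi.2 hs), ← lintegral_mul_const _ hw,
            ← lintegral_indicator measurableSet_Ioo]
          simp [φ, T, indicator]
        · have hempty (r : ℝ) : ¬(0 < r ∧ r < s) := fun h => hs (h.1.trans h.2)
          simp [φ, T, indicator, hs, hempty]

lemma succ_mul_lintegral_Ioo_ofReal_pow (k : ℕ) {s : ℝ} (hs : 0 ≤ s) :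
    (k + 1) * ∫⁻ r in Ioo 0 s, ENNReal.ofReal r ^ k = ENNReal.ofReal s ^ (k + 1) := by
  have hpow : ∫⁻ r in Ioc 0 s, ENNReal.ofReal r ^ k = ∫⁻ r in Ioc 0 s, ENNReal.ofReal (r ^ k) :=
    setLIntegral_congr_fun measurableSet_Ioc fun r hr => (ENNReal.ofReal_pow hr.1.le k).symm
  rw [Measure.restrict_congr_set Ioo_ae_eq_Ioc, hpow,
    ← ofReal_integral_eq_lintegral_ofReal (intervalIntegral.intervalIntegrable_pow k).1
      (ae_restrict_of_forall_mem measurableSet_Ioc fun r hr => pow_nonneg hr.1.le k),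
    ← intervalIntegral.integral_of_le hs, integral_pow, ← ENNReal.ofReal_pow hs,
    ← Nat.cast_add_one, ← ENNReal.ofReal_natCast, ← ENNReal.ofReal_mul (Nat.cast_nonneg _)]
  congr 1
  push_cast
  field_simp
  simp

variable {F : Type*} [NormedAddCommGroup F]

lemma integrableOn_Ioi_of_lintegral_pow_mul_enorm_ne_top {g : ℝ → F} {a : ℝ} (k : ℕ) (ha : 0 < a)
    (hg : AEStronglyMeasurable g (volume.restrict (Ioi a)))
    (hfin : ∫⁻ r in Ioi 0, ENNReal.ofReal r ^ k * ‖g r‖ₑ ≠ ⊤) : IntegrableOn g (Ioi a) := by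
  have hweight : ENNReal.ofReal a ^ k * ∫⁻ r in Ioi a, ‖g r‖ₑ ≤
      ∫⁻ r in Ioi 0, ENNReal.ofReal r ^ k * ‖g r‖ₑ := by
    rw [← lintegral_const_mul' _ _ (by finiteness)]
    refine (setLIntegral_mono' measurableSet_Ioi fun r (hr : a < r) => ?_).trans
      (lintegral_mono_set (Ioi_subset_Ioi ha.le))
    gcongr
  refine ⟨hg, lt_top_iff_ne_top.2 fun htop => hfin (top_unique ?_)⟩
  rwa [htop, ENNReal.mul_top (pow_ne_zero _ (ENNReal.ofReal_pos.2 ha).ne')] at hweight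

variable [NormedSpace ℝ F] [CompleteSpace F]

lemma tendsto_atTop_zero_of_lintegral_pow_mul_enorm_ne_top {g : ℝ → F} (k l : ℕ)
    (hg : DifferentiableOn ℝ g (Ioi 0))
    (hfin : ∫⁻ r in Ioi 0, ENNReal.ofReal r ^ k * ‖g r‖ₑ ≠ ⊤)
    (hfin' : ∫⁻ r in Ioi 0, ENNReal.ofReal r ^ l * ‖deriv g r‖ₑ ≠ ⊤) :
    Tendsto g atTop (𝓝 0) := by
  have hg1 : DifferentiableOn ℝ g (Ioi 1) := hg.mono (Ioi_subset_Ioi zero_le_one)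
  exact tendsto_zero_of_hasDerivAt_of_integrableOn_Ioi
    (fun r hr => (hg1.differentiableAt (Ioi_mem_nhds hr)).hasDerivAt)
    (integrableOn_Ioi_of_lintegral_pow_mul_enorm_ne_top l one_pos
      (aestronglyMeasurable_deriv g _) hfin')
    (integrableOn_Ioi_of_lintegral_pow_mul_enorm_ne_top k one_pos
      (hg1.continuousOn.aestronglyMeasurable measurableSet_Ioi) hfin)

lemma enorm_le_lintegral_Ioi_enorm_deriv {g : ℝ → F} {a : ℝ}
    (hg : ∀ r ∈ Ici a, DifferentiableAt ℝ g r) (hlim : Tendsto g atTop (𝓝 0)) :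
    ‖g a‖ₑ ≤ ∫⁻ r in Ioi a, ‖deriv g r‖ₑ := by
  rcases eq_top_or_lt_top (∫⁻ r in Ioi a, ‖deriv g r‖ₑ) with htop | hfin
  · exact htop ▸ le_top
  have hftc : ∫ r in Ioi a, deriv g r = 0 - g a :=
    integral_Ioi_of_hasDerivAt_of_tendsto' (fun r hr => (hg r hr).hasDerivAt)
      ⟨aestronglyMeasurable_deriv g _, hfin⟩ hlim
  calc ‖g a‖ₑ = ‖∫ r in Ioi a, deriv g r‖ₑ := by rw [hftc, zero_sub, enorm_neg]
    _ ≤ ∫⁻ r in Ioi a, ‖deriv g r‖ₑ := enorm_integral_le_lintegral_enorm _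

theorem succ_mul_lintegral_Ioi_pow_mul_enorm_le_lintegral_deriv {g : ℝ → F} (k : ℕ)
    (hg : DifferentiableOn ℝ g (Ioi 0)) (hlim : Tendsto g atTop (𝓝 0)) :
    (k + 1) * ∫⁻ r in Ioi 0, ENNReal.ofReal r ^ k * ‖g r‖ₑ ≤
      ∫⁻ r in Ioi 0, ENNReal.ofReal r ^ (k + 1) * ‖deriv g r‖ₑ := by
  have hdiff (r : ℝ) (hr : 0 < r) : DifferentiableAt ℝ g r :=
    hg.differentiableAt (Ioi_mem_nhds hr)
  calc (k + 1) * ∫⁻ r in Ioi 0, ENNReal.ofReal r ^ k * ‖g r‖ₑ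
      ≤ (k + 1) * ∫⁻ r in Ioi 0, ENNReal.ofReal r ^ k * ∫⁻ s in Ioi r, ‖deriv g s‖ₑ := by
        gcongr (k + 1) * ?_
        refine setLIntegral_mono' measurableSet_Ioi fun r (hr : 0 < r) => ?_
        gcongr
        exact enorm_le_lintegral_Ioi_enorm_deriv (fun s hs => hdiff s (hr.trans_le hs)) hlim
    _ = ∫⁻ s in Ioi 0, (k + 1) * (∫⁻ r in Ioo 0 s, ENNReal.ofReal r ^ k) * ‖deriv g s‖ₑ := by
        rw [lintegral_Ioi_mul_lintegral_Ioi (by fun_prop) (stronglyMeasurable_deriv g).enorm,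
          ← lintegral_const_mul' _ _ (by finiteness)]
        simp only [mul_assoc]
    _ = ∫⁻ s in Ioi 0, ENNReal.ofReal s ^ (k + 1) * ‖deriv g s‖ₑ :=
        setLIntegral_congr_fun measurableSet_Ioi fun s (hs : 0 < s) => by
          simp only [succ_mul_lintegral_Ioo_ofReal_pow k hs.le]

end HalfLine

section Ray

open Set Filter
open scoped Topology

variable {E F : Type*} [NormedAddCommGroup E] [NormedSpace ℝ E] [NormedAddCommGroup F]
  [NormedSpace ℝ F]

lemma enorm_deriv_comp_smul_le {f : E → F} {v : E} {r : ℝ} (hf : DifferentiableAt ℝ f (r • v)) :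
    ‖deriv (fun t : ℝ => f (t • v)) r‖ₑ ≤ ‖fderiv ℝ f (r • v)‖ₑ * ‖v‖ₑ := by
  have hray : HasDerivAt (fun t : ℝ => t • v) v r := by
    simpa using (hasDerivAt_id r).smul_const v
  have hderiv : deriv (fun t : ℝ => f (t • v)) r = fderiv ℝ f (r • v) v :=
    (hf.hasFDerivAt.comp_hasDerivAt r hray).deriv
  rw [hderiv]
  exact (fderiv ℝ f (r • v)).le_opENorm v

variable [CompleteSpace F]

lemma mul_lintegral_ray_inv_enorm_mul_enorm_le_lintegral_fderiv {f : E → F}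
    (hf : Differentiable ℝ f) (n : ℕ) {v : E} (hv : ‖v‖ = 1)
    (hfin : ∫⁻ r in Ioi (0 : ℝ), ENNReal.ofReal r ^ (n - 1) * ‖f (r • v)‖ₑ ≠ ⊤) :
    (n - 1 : ℕ) * ∫⁻ r in Ioi (0 : ℝ), ENNReal.ofReal r ^ (n - 1) *
        (‖r • v‖ₑ⁻¹ * ‖f (r • v)‖ₑ) ≤
      ∫⁻ r in Ioi (0 : ℝ), ENNReal.ofReal r ^ (n - 1) * ‖fderiv ℝ f (r • v)‖ₑ := by
  rcases lt_or_ge n 2 with hn | hn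
  · simp [Nat.sub_eq_zero_of_le (Nat.le_of_lt_succ hn)]
  obtain ⟨k, rfl⟩ := Nat.exists_eq_add_of_le' hn
  let g : ℝ → F := fun r => f (r • v)
  have hg : DifferentiableOn ℝ g (Ioi 0) := by fun_prop
  have hderiv : ∫⁻ r in Ioi (0 : ℝ), ENNReal.ofReal r ^ (k + 1) * ‖deriv g r‖ₑ ≤
      ∫⁻ r in Ioi (0 : ℝ), ENNReal.ofReal r ^ (k + 1) * ‖fderiv ℝ f (r • v)‖ₑ := by
    gcongr with r
    simpa [← ofReal_norm v, hv] using enorm_deriv_comp_smul_le (hf (r • v))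
  rcases eq_or_ne (∫⁻ r in Ioi (0 : ℝ), ENNReal.ofReal r ^ (k + 1) * ‖deriv g r‖ₑ) ⊤
    with htop | hfin'
  · exact le_top.trans (htop.symm.trans_le hderiv)
  have hlim : Tendsto g atTop (𝓝 0) :=
    tendsto_atTop_zero_of_lintegral_pow_mul_enorm_ne_top (k + 1) (k + 1) hg hfin hfin'
  have hcancel (r : ℝ) (hr : 0 < r) :
      ENNReal.ofReal r ^ (k + 1) * (‖r • v‖ₑ⁻¹ * ‖g r‖ₑ) = ENNReal.ofReal r ^ k * ‖g r‖ₑ := by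
    have hnorm : ‖r • v‖ₑ = ENNReal.ofReal r := by
      rw [← ofReal_norm, norm_smul, hv, mul_one, Real.norm_of_nonneg hr.le]
    rw [hnorm, pow_succ, mul_assoc, ← mul_assoc (ENNReal.ofReal r),
      ENNReal.mul_inv_cancel (ENNReal.ofReal_pos.2 hr).ne' ENNReal.ofReal_ne_top, one_mul]
  calc ((k + 1 : ℕ) : ℝ≥0∞) * ∫⁻ r in Ioi (0 : ℝ), ENNReal.ofReal r ^ (k + 1) *
        (‖r • v‖ₑ⁻¹ * ‖g r‖ₑ)
      = (k + 1) * ∫⁻ r in Ioi (0 : ℝ), ENNReal.ofReal r ^ k * ‖g r‖ₑ := by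
        rw [setLIntegral_congr_fun measurableSet_Ioi hcancel, Nat.cast_add_one]
    _ ≤ ∫⁻ r in Ioi (0 : ℝ), ENNReal.ofReal r ^ (k + 1) * ‖deriv g r‖ₑ :=
        succ_mul_lintegral_Ioi_pow_mul_enorm_le_lintegral_deriv k hg hlim
    _ ≤ ∫⁻ r in Ioi (0 : ℝ), ENNReal.ofReal r ^ (k + 1) * ‖fderiv ℝ f (r • v)‖ₑ := hderiv

end Ray

section PolarCoordinates

open Set Metric Module

variable {E : Type*} [NormedAddCommGroup E] [NormedSpace ℝ E] [FiniteDimensional ℝ E]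
  [MeasurableSpace E] [BorelSpace E] (μ : Measure E) [μ.IsAddHaarMeasure]

lemma lintegral_eq_lintegral_toSphere [Nontrivial E] {f : E → ℝ≥0∞} (hf : Measurable f) :
    ∫⁻ z, f z ∂μ = ∫⁻ v : sphere (0 : E) 1,
      (∫⁻ r in Ioi (0 : ℝ), ENNReal.ofReal r ^ (finrank ℝ E - 1) * f (r • (v : E)))
        ∂μ.toSphere := by
  have hpolar : Measurable fun p : sphere (0 : E) 1 × Ioi (0 : ℝ) => f ((p.2 : ℝ) • (p.1 : E)) :=
    hf.comp (by fun_prop)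
  calc ∫⁻ z, f z ∂μ
      = ∫⁻ z : ({(0 : E)}ᶜ : Set E), f z ∂(μ.comap (↑)) := by
        rw [lintegral_subtype_comap (measurableSet_singleton _).compl f, restrict_compl_singleton]
    _ = ∫⁻ p, f ((p.2 : ℝ) • (p.1 : E)) ∂(μ.toSphere.prod (.volumeIoiPow (finrank ℝ E - 1))) := by
        rw [← μ.measurePreserving_homeomorphUnitSphereProd.lintegral_comp hpolar]
        refine lintegral_congr fun z => ?_
        simp [smul_smul, norm_ne_zero_iff.2 z.2]
    _ = ∫⁻ v : sphere (0 : E) 1, (∫⁻ r : Ioi (0 : ℝ),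
          ENNReal.ofReal (r : ℝ) ^ (finrank ℝ E - 1) * f ((r : ℝ) • (v : E))
            ∂(volume.comap Subtype.val)) ∂μ.toSphere := by
        rw [lintegral_prod _ hpolar.aemeasurable]
        refine lintegral_congr fun v => ?_
        have hray : Measurable fun r : Ioi (0 : ℝ) => f ((r : ℝ) • (v : E)) :=
          hpolar.comp measurable_prodMk_left
        rw [Measure.volumeIoiPow, lintegral_withDensity_eq_lintegral_mul _ (by fun_prop) hray]
        refine lintegral_congr fun r => ?_
        rw [Pi.mul_apply, ENNReal.ofReal_pow (le_of_lt r.2)]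
    _ = _ := lintegral_congr fun v => lintegral_subtype_comap measurableSet_Ioi
        fun r : ℝ => ENNReal.ofReal r ^ (finrank ℝ E - 1) * f (r • (v : E))

variable {F : Type*} [NormedAddCommGroup F] [NormedSpace ℝ F] [CompleteSpace F]

theorem mul_lintegral_inv_enorm_mul_enorm_le_lintegral_fderiv {f : E → F}
    (hf : Differentiable ℝ f) (hint : Integrable f μ) :
    (finrank ℝ E - 1 : ℕ) * ∫⁻ z, ‖z‖ₑ⁻¹ * ‖f z‖ₑ ∂μ ≤ ∫⁻ z, ‖fderiv ℝ f z‖ₑ ∂μ := by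
  rcases subsingleton_or_nontrivial E with hE | hE
  · simp [finrank_zero_of_subsingleton]
  have hf_meas : Measurable fun z => ‖f z‖ₑ := hf.continuous.enorm.measurable
  have hfin := hint.2.ne
  rw [lintegral_eq_lintegral_toSphere μ hf_meas] at hfin
  rw [lintegral_eq_lintegral_toSphere μ (by fun_prop),
    lintegral_eq_lintegral_toSphere μ (measurable_fderiv ℝ f).enorm,
    ← lintegral_const_mul' _ _ (by finiteness)]
  refine lintegral_mono_ae ?_
  have hmeas : Measurable fun v : sphere (0 : E) 1 =>
      ∫⁻ r in Ioi (0 : ℝ), ENNReal.ofReal r ^ (finrank ℝ E - 1) * ‖f (r • (v : E))‖ₑ :=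
    Measurable.lintegral_prod_right' (f := fun p : sphere (0 : E) 1 × ℝ =>
      ENNReal.ofReal p.2 ^ (finrank ℝ E - 1) * ‖f (p.2 • (p.1 : E))‖ₑ)
      (Measurable.mul (by fun_prop) (hf_meas.comp (by fun_prop)))
  filter_upwards [ae_lt_top hmeas hfin] with v hv
  exact mul_lintegral_ray_inv_enorm_mul_enorm_le_lintegral_fderiv hf _
    (norm_eq_of_mem_sphere v) hv.ne

theorem mul_lintegral_inv_enorm_sub_mul_enorm_le_lintegral_fderiv {f : E → F}
    (hf : Differentiable ℝ f) (hint : Integrable f μ) (c : E) :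
    (finrank ℝ E - 1 : ℕ) * ∫⁻ z, ‖c - z‖ₑ⁻¹ * ‖f z‖ₑ ∂μ ≤ ∫⁻ z, ‖fderiv ℝ f z‖ₑ ∂μ := by
  have h := mul_lintegral_inv_enorm_mul_enorm_le_lintegral_fderiv μ
    (f := fun z => f (c + z)) (by fun_prop) (hint.comp_add_left c)
  simp only [fderiv_comp_add_left] at h
  rw [lintegral_add_left_eq_self (fun z => ‖fderiv ℝ f z‖ₑ) c] at h
  rw [← lintegral_add_left_eq_self _ c]
  simpa using h

end PolarCoordinates

section NormSq

lemma eLpNorm_two_sq {α ε : Type*} [MeasurableSpace α] [ENorm ε] (μ : Measure α) (f : α → ε) :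
    eLpNorm f 2 μ ^ 2 = ∫⁻ x, ‖f x‖ₑ ^ 2 ∂μ := by
  simpa using eLpNorm_nnreal_pow_eq_lintegral (μ := μ) (f := f) (p := 2) two_ne_zero

variable {E F : Type*} [NormedAddCommGroup E] [NormedSpace ℝ E]
  [NormedAddCommGroup F] [InnerProductSpace ℝ F]

lemma enorm_fderiv_norm_sq_le {u : E → F} {x : E} (hu : DifferentiableAt ℝ u x) :
    ‖fderiv ℝ (fun y => ‖u y‖ ^ 2) x‖ₑ ≤ ‖u x‖ₑ ^ 2 + ‖fderiv ℝ u x‖ₑ ^ 2 := by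
  have hnorm : ‖fderiv ℝ (fun y => ‖u y‖ ^ 2) x‖ ≤ 2 * ‖u x‖ * ‖fderiv ℝ u x‖ := by
    rw [hu.hasFDerivAt.norm_sq.fderiv, two_smul, ← two_smul ℝ, norm_smul, Real.norm_two, mul_assoc]
    gcongr
    simpa using (innerSL ℝ (u x)).opNorm_comp_le (fderiv ℝ u x)
  simp only [← ofReal_norm, ← ENNReal.ofReal_pow (norm_nonneg _)]
  rw [← ENNReal.ofReal_add (by positivity) (by positivity)]
  exact ENNReal.ofReal_le_ofReal (hnorm.trans (two_mul_le_add_sq _ _))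

end NormSq

section AharonovBohm

lemma norm_perp (x : E2) : ‖perp x‖ = ‖x‖ := by
  simp [perp, EuclideanSpace.norm_eq, Fin.sum_univ_two, add_comm]

lemma enorm_K_le (R : ℝ) (x : E2) : ‖K R x‖ₑ ≤ ‖x‖ₑ⁻¹ := by
  rcases eq_or_ne x 0 with rfl | hx
  · simp
  have hpos : 0 < ‖x‖ := norm_pos_iff.2 hx
  have hnorm : ‖K R x‖ ≤ ‖x‖⁻¹ := by
    calc ‖K R x‖ = (max R ‖x‖ ^ 2)⁻¹ * ‖x‖ := by
          rw [K, norm_smul, norm_perp, Real.norm_of_nonneg (by positivity)]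
      _ ≤ (‖x‖ ^ 2)⁻¹ * ‖x‖ := by
          gcongr
          exact le_max_right R ‖x‖
      _ = ‖x‖⁻¹ := by field_simp
  rw [← ofReal_norm, ← ofReal_norm, ← ENNReal.ofReal_inv_of_pos hpos]
  exact ENNReal.ofReal_le_ofReal hnorm

lemma enorm_convKs_le (R : ℝ) (ρ : E2 → ℝ) (x : E2) :
    ‖convKs R ρ x‖ₑ ≤ ∫⁻ y, ‖x - y‖ₑ⁻¹ * ‖ρ y‖ₑ := by
  refine (enorm_integral_le_lintegral_enorm _).trans (lintegral_mono fun y => ?_)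
  rw [enorm_smul, mul_comm]
  gcongr
  exact enorm_K_le R (x - y)

theorem enorm_convKs_le_lintegral_enorm_fderiv (R : ℝ) {ρ : E2 → ℝ} (hρ : Differentiable ℝ ρ)
    (hint : Integrable ρ) (x : E2) : ‖convKs R ρ x‖ₑ ≤ ∫⁻ y, ‖fderiv ℝ ρ y‖ₑ := by
  have hhardy := mul_lintegral_inv_enorm_sub_mul_enorm_le_lintegral_fderiv volume hρ hint x
  rw [finrank_euclideanSpace_fin] at hhardy
  exact (enorm_convKs_le R ρ x).trans (by simpa using hhardy)

lemma H1_sq (u : E2 → ℂ) :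
    H1 u ^ 2 = eLpNorm u 2 volume ^ 2 + eLpNorm (fun x => fderiv ℝ u x) 2 volume ^ 2 := by
  rw [H1, ← ENNReal.rpow_natCast, ← ENNReal.rpow_mul]
  norm_num

lemma enorm_convKs_norm_sq_le (R : ℝ) {u : E2 → ℂ} (hu : Differentiable ℝ u) (x : E2) :
    ‖convKs R (fun y => ‖u y‖ ^ 2) x‖ₑ ≤ H1 u ^ 2 := by
  rw [H1_sq, eLpNorm_two_sq, eLpNorm_two_sq]
  rcases eq_or_ne (∫⁻ y, ‖u y‖ₑ ^ 2) ⊤ with htop | hfin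
  · simp [htop]
  have hint : Integrable fun y => ‖u y‖ ^ 2 :=
    ⟨(hu.norm_sq ℝ).continuous.aestronglyMeasurable, by
      simpa [HasFiniteIntegral] using lt_top_iff_ne_top.2 hfin⟩
  calc ‖convKs R (fun y => ‖u y‖ ^ 2) x‖ₑ
      ≤ ∫⁻ y, ‖fderiv ℝ (fun y => ‖u y‖ ^ 2) y‖ₑ :=
        enorm_convKs_le_lintegral_enorm_fderiv R (hu.norm_sq ℝ) hint x
    _ ≤ ∫⁻ y, (‖u y‖ₑ ^ 2 + ‖fderiv ℝ u y‖ₑ ^ 2) :=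
        lintegral_mono fun y => enorm_fderiv_norm_sq_le (hu y)
    _ = (∫⁻ y, ‖u y‖ₑ ^ 2) + ∫⁻ y, ‖fderiv ℝ u y‖ₑ ^ 2 :=
        lintegral_add_left (hu.continuous.enorm.measurable.pow_const 2) _

lemma one_le_sqrt_neg_log {R : ℝ} (hR : 0 < R) (hR' : R ≤ Real.exp (-1)) :
    1 ≤ Real.sqrt (-Real.log R) := by
  rw [Real.one_le_sqrt, le_neg]
  exact (Real.log_le_iff_le_exp hR).2 hR'

theorem statement5_general (R : ℝ) {u : E2 → ℂ} (hu : Differentiable ℝ u) :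
    eLpNorm (convKs R fun y => ‖u y‖ ^ 2) ⊤ volume ≤ H1 u ^ 2 := by
  rw [eLpNorm_exponent_top]
  exact eLpNormEssSup_le_of_ae_enorm_bound (ae_of_all _ (enorm_convKs_norm_sq_le R hu))

end AharonovBohm

/-- Lemma 2.5: there is `C > 0` such that for all `0 < R < e⁻¹` and `u ∈ H¹(ℝ², ℂ)`,
`‖K_R ∗ |u|²‖_∞ ≤ C √|log R| ‖u‖_{H¹}²`. -/
theorem statement5 :
    ∃ C : ℝ, 0 < C ∧ ∀ R : ℝ, 0 < R → R < Real.exp (-1) →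
      ∀ u : E2 → ℂ, Differentiable ℝ u → H1 u < ⊤ →
        eLpNorm (convKs R fun y => ‖u y‖ ^ 2) ⊤ volume
          ≤ ENNReal.ofReal (C * Real.sqrt (-Real.log R)) * H1 u ^ 2 := by
  refine ⟨1, one_pos, fun R hR hR1 u hu _ => ?_⟩
  have hlog : 1 ≤ ENNReal.ofReal (1 * Real.sqrt (-Real.log R)) := by
    simpa using one_le_sqrt_neg_log hR hR1.le
  exact (statement5_general R hu).trans (le_mul_of_one_le_left zero_le hlog)
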